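/- Let R be a commutative ring, ϖ ∈ R, and N ≥ 1 an integer. Let A := R[T,S] be the polynomial ring in two variables and let B := R[X,Y]/(XY − ϖ), regarded as an A-module via the R-algebra homomorphism A → B sending T ↦ X^N and S ↦ Y^N (under which B is a finitely generated A-module). Then for every i ≠ 1 the module Ext^i_A(B, A) vanishes (in particular Hom_A(B, A) = 0), and Ext^1_A(B, A) is isomorphic to B as an A-module. -/

import Mathlib

open MvPolynomial CategoryTheory

noncomputable section

/-- The ring `B = R[X,Y]/(XY - ϖ)`. -/
abbrev CurveRing (R : Type) [CommRing R] (ϖ : R) : Type :=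
  MvPolynomial (Fin 2) R ⧸
    Ideal.span {(X 0 : MvPolynomial (Fin 2) R) * X 1 - C ϖ}

/-- The class of `X` in `R[X,Y]/(XY - ϖ)`. -/
def cX (R : Type) [CommRing R] (ϖ : R) : CurveRing R ϖ :=
  Ideal.Quotient.mk _ (X 0)

/-- The class of `Y` in `R[X,Y]/(XY - ϖ)`. -/
def cY (R : Type) [CommRing R] (ϖ : R) : CurveRing R ϖ :=
  Ideal.Quotient.mk _ (X 1)

/-- The ring homomorphism `A = R[T,S] → B = R[X,Y]/(XY - ϖ)` sending `T ↦ X^N`, `S ↦ Y^N`. -/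
def toCurve (R : Type) [CommRing R] (ϖ : R) (N : ℕ) :
    MvPolynomial (Fin 2) R →+* CurveRing R ϖ :=
  (aeval ![cX R ϖ ^ N, cY R ϖ ^ N]).toRingHom

/-- `B = R[X,Y]/(XY - ϖ)` regarded as a module over `A = R[T,S]` via `T ↦ X^N`, `S ↦ Y^N`. -/
def curveModule (R : Type) [CommRing R] (ϖ : R) (N : ℕ) :
    Module (MvPolynomial (Fin 2) R) (CurveRing R ϖ) :=
  Module.compHom (CurveRing R ϖ) (toCurve R ϖ N)

/-- `B`, with the above `A`-module structure, as an object of `ModuleCat A`. -/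
def curveModCat (R : Type) [CommRing R] (ϖ : R) (N : ℕ) :
    ModuleCat (MvPolynomial (Fin 2) R) :=
  @ModuleCat.of (MvPolynomial (Fin 2) R) _ (CurveRing R ϖ) _ (curveModule R ϖ N)

section Homological
variable {A : Type} [CommRing A] {P₁ P₀ M : ModuleCat.{0} A}

/-- Objects of a two-term complex. -/
def twoTermX (P₁ P₀ : ModuleCat.{0} A) : ℕ → ModuleCat.{0} A
  | 0 => P₀
  | 1 => P₁
  | _ + 2 => ModuleCat.of A PUnit

/-- Differentials of a two-term complex. -/
def twoTermD (d : P₁ ⟶ P₀) : ∀ n, twoTermX P₁ P₀ (n + 1) ⟶ twoTermX P₁ P₀ n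
  | 0 => d
  | _ + 1 => 0

/-- A two-term complex. -/
def twoTerm (d : P₁ ⟶ P₀) : ChainComplex (ModuleCat.{0} A) ℕ :=
  ChainComplex.of (twoTermX P₁ P₀) (twoTermD d) (fun _ => Limits.zero_comp)

lemma twoTerm_d (d : P₁ ⟶ P₀) : (twoTerm d).d 1 0 = d :=
  ChainComplex.of_d (twoTermX P₁ P₀) (twoTermD d) 0

lemma twoTerm_isZero (d : P₁ ⟶ P₀) (n : ℕ) : Limits.IsZero ((twoTerm d).X (n + 2)) :=
  ModuleCat.isZero_of_subsingleton (ModuleCat.of A PUnit)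

/-- The projective resolution given by a short exact sequence. -/
def twoTermRes [Projective P₁] [Projective P₀] (d : P₁ ⟶ P₀) (p : P₀ ⟶ M)
    (w : d ≫ p = 0) (h : (ShortComplex.mk d p w).ShortExact) : ProjectiveResolution M where
  complex := twoTerm d
  projective n := by
    match n with
    | 0 => exact (inferInstance : Projective P₀)
    | 1 => exact (inferInstance : Projective P₁)
    | n + 2 => exact (twoTerm_isZero d n).projective
  π := (ChainComplex.toSingle₀Equiv (twoTerm d) M).symm ⟨p, by rw [twoTerm_d]; exact w⟩
  quasiIso := ⟨fun n => by
    match n with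
    | 0 =>
      rw [ChainComplex.quasiIsoAt₀_iff, ShortComplex.quasiIso_iff_of_zeros']
      · refine (ShortComplex.exact_and_epi_g_iff_of_iso ?_).2 ⟨h.exact, h.epi_g⟩
        refine ShortComplex.isoMk (Iso.refl P₁) (Iso.refl P₀) (Iso.refl M) ?_ ?_
        · exact (Category.id_comp d).trans ((twoTerm_d d).symm.trans (Category.comp_id _).symm)
        · refine (Category.id_comp p).trans (Eq.trans ?_ (Category.comp_id _).symm)
          exact (ChainComplex.toSingle₀Equiv_symm_apply_f_zero (C := twoTerm d) p _).symm
      all_goals rfl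
    | 1 =>
      rw [quasiIsoAt_iff_exactAt' _ _ (ChainComplex.exactAt_succ_single_obj _ _)]
      rw [HomologicalComplex.exactAt_iff' _ 2 1 0 (by simp) (by simp)]
      refine (ShortComplex.exact_iff_mono _ ((twoTerm_isZero d 0).eq_of_src _ _)).2 ?_
      have := h.mono_f
      change Mono ((twoTerm d).d 1 0)
      rw [twoTerm_d]
      exact this
    | n + 2 =>
      rw [quasiIsoAt_iff_exactAt' _ _ (ChainComplex.exactAt_succ_single_obj _ _)]
      rw [HomologicalComplex.exactAt_iff]
      exact ShortComplex.exact_of_isZero_X₂ _ (twoTerm_isZero d n)⟩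

lemma ext_subsingleton_ge_two [Projective P₁] [Projective P₀] (d : P₁ ⟶ P₀) (p : P₀ ⟶ M)
    (w : d ≫ p = 0) (h : (ShortComplex.mk d p w).ShortExact) (Y : ModuleCat.{0} A) (n : ℕ) :
    Subsingleton (((Ext A (ModuleCat.{0} A) (n + 2)).obj (Opposite.op M)).obj Y) := by
  apply ModuleCat.subsingleton_of_isZero
  refine Limits.IsZero.of_iso ?_ ((twoTermRes d p w h).isoExt (n + 2) Y)
  rw [← HomologicalComplex.exactAt_iff_isZero_homology, HomologicalComplex.exactAt_iff]
  refine ShortComplex.exact_of_isZero_X₂ _ ?_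
  rw [Limits.IsZero.iff_id_eq_zero]
  ext (x : _ ⟶ _)
  obtain rfl : x = 0 := (twoTerm_isZero d n).eq_of_src _ _
  rfl

lemma ext_subsingleton_zero [Projective P₁] [Projective P₀] (d : P₁ ⟶ P₀) (p : P₀ ⟶ M)
    (w : d ≫ p = 0) (h : (ShortComplex.mk d p w).ShortExact) (Y : ModuleCat.{0} A)
    (hinj : ∀ ψ : P₀ ⟶ Y, d ≫ ψ = 0 → ψ = 0) :
    Subsingleton (((Ext A (ModuleCat.{0} A) 0).obj (Opposite.op M)).obj Y) := by
  apply ModuleCat.subsingleton_of_isZero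
  refine Limits.IsZero.of_iso ?_ ((twoTermRes d p w h).isoExt 0 Y)
  rw [← HomologicalComplex.exactAt_iff_isZero_homology,
    HomologicalComplex.exactAt_iff' _ 0 0 1 (by simp) (by simp),
    ShortComplex.moduleCat_exact_iff]
  intro (x : P₀ ⟶ Y) hx
  have hx' : (twoTerm d).d 1 0 ≫ x = 0 := hx
  rw [twoTerm_d] at hx'
  obtain rfl := hinj x hx'
  exact ⟨0, map_zero _⟩

lemma ext_one_equiv [Projective P₁] [Projective P₀] (d : P₁ ⟶ P₀) (p : P₀ ⟶ M)
    (w : d ≫ p = 0) (h : (ShortComplex.mk d p w).ShortExact) (Y : ModuleCat.{0} A)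
    {Q : Type} [AddCommGroup Q] [Module A Q] (ρ : (P₁ ⟶ Y) →ₗ[A] Q)
    (hρ : Function.Surjective ρ) (hker : ∀ φ, ρ φ = 0 ↔ ∃ ψ : P₀ ⟶ Y, d ≫ ψ = φ) :
    Nonempty (((Ext A (ModuleCat.{0} A) 1).obj (Opposite.op M)).obj Y ≃ₗ[A] Q) := by
  let K := (twoTermRes d p w h).complex.linearYonedaObj A Y
  have h2 : Limits.IsZero (K.X 2) := by
    rw [Limits.IsZero.iff_id_eq_zero]
    ext (x : _ ⟶ _)
    obtain rfl : x = 0 := (twoTerm_isZero d 0).eq_of_src _ _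
    rfl
  let S := K.sc' 0 1 2
  have hg : S.g = 0 := h2.eq_of_tgt _ _
  let i1 : ((Ext A (ModuleCat.{0} A) 1).obj (Opposite.op M)).obj Y ≅ S.homology :=
    (twoTermRes d p w h).isoExt 1 Y ≪≫
      ShortComplex.homologyMapIso (K.isoSc' 0 1 2 (by simp) (by simp))
  have : IsIso S.homologyι := S.isIso_homologyι hg
  let i2 := i1 ≪≫ asIso S.homologyι ≪≫ S.moduleCatOpcyclesIso
  let ρ' : S.X₂ →ₗ[A] Q := ρ
  have hr : LinearMap.range S.f.hom = LinearMap.ker ρ' := by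
    ext (φ : P₁ ⟶ Y)
    refine Iff.trans ?_ (hker φ).symm
    have key : ∀ ψ : P₀ ⟶ Y, S.f.hom ψ = d ≫ ψ := by
      intro ψ
      change (twoTerm d).d 1 0 ≫ ψ = _
      rw [twoTerm_d]
      rfl
    constructor
    · rintro ⟨ψ, rfl⟩
      exact ⟨ψ, (key ψ).symm⟩
    · rintro ⟨ψ, rfl⟩
      exact ⟨ψ, key ψ⟩
  exact ⟨i2.toLinearEquiv ≪≫ₗ Submodule.quotEquivOfEq _ _ hr ≪≫ₗ
    LinearMap.quotKerEquivOfSurjective ρ' hρ⟩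

end Homological
section Algebraic

/-- `R[X,Y]`, to be regarded as an algebra over `A = R[T,S]` via `T ↦ X^N`, `S ↦ Y^N`. -/
def Big (R : Type) [CommRing R] (_N : ℕ) : Type := MvPolynomial (Fin 2) R

instance (R : Type) [CommRing R] (N : ℕ) : CommRing (Big R N) :=
  inferInstanceAs (CommRing (MvPolynomial (Fin 2) R))

instance (R : Type) [CommRing R] (N : ℕ) : Algebra (MvPolynomial (Fin 2) R) (Big R N) :=
  RingHom.toAlgebra (expand N : MvPolynomial (Fin 2) R →ₐ[R] MvPolynomial (Fin 2) R).toRingHom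

/-- `B` with its `A`-module structure. -/
def CB (R : Type) [CommRing R] (ϖ : R) (_N : ℕ) : Type := CurveRing R ϖ

instance (R : Type) [CommRing R] (ϖ : R) (N : ℕ) : AddCommGroup (CB R ϖ N) :=
  inferInstanceAs (AddCommGroup (CurveRing R ϖ))

instance (R : Type) [CommRing R] (ϖ : R) (N : ℕ) :
    Module (MvPolynomial (Fin 2) R) (CB R ϖ N) := curveModule R ϖ N

variable {R : Type} [CommRing R] (ϖ : R) {N : ℕ}

/-- Inclusion of polynomials in `Big`. -/
def toBig (N : ℕ) (f : MvPolynomial (Fin 2) R) : Big R N := f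

lemma big_smul (a : MvPolynomial (Fin 2) R) (f : Big R N) :
    a • f = toBig N (expand N a) * f := rfl

lemma toCurve_eq (a : MvPolynomial (Fin 2) R) :
    toCurve R ϖ N a = Ideal.Quotient.mk _ (expand N a) := by
  have : (aeval ![cX R ϖ ^ N, cY R ϖ ^ N] : MvPolynomial (Fin 2) R →ₐ[R] CurveRing R ϖ) =
      (Ideal.Quotient.mkₐ R _).comp (expand N) := by
    apply MvPolynomial.algHom_ext
    intro i
    fin_cases i
    · simp [cX]
    · simp [cY]
  exact DFunLike.congr_fun this a

/-- The quotient map. -/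
def mkB : MvPolynomial (Fin 2) R →+* CurveRing R ϖ := Ideal.Quotient.mk _

lemma mkB_smul (a f : MvPolynomial (Fin 2) R) :
    mkB ϖ (expand N a * f) = toCurve R ϖ N a * mkB ϖ f := by
  rw [map_mul, toCurve_eq]
  rfl

lemma mkB_eq_zero_iff (f : MvPolynomial (Fin 2) R) :
    mkB ϖ f = 0 ↔ ∃ g, f = (X 0 * X 1 - C ϖ) * g := by
  refine Iff.trans Ideal.Quotient.eq_zero_iff_mem ?_
  exact Ideal.mem_span_singleton

/-- The projection `R[X,Y] → B`, as an `A`-linear map. -/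
def projB (N : ℕ) : Big R N →ₗ[MvPolynomial (Fin 2) R] CB R ϖ N where
  toFun f := mkB ϖ f
  map_add' f g := (mkB ϖ).map_add f g
  map_smul' a f := mkB_smul ϖ a f

/-- The element `XY - ϖ`. -/
def relD (N : ℕ) : Big R N := toBig N (X 0 * X 1 - C ϖ)

lemma projB_surjective : Function.Surjective (projB ϖ N) :=
  (Ideal.Quotient.mk_surjective : Function.Surjective (mkB ϖ))

lemma projB_eq_zero_iff (f : Big R N) : projB ϖ N f = 0 ↔ ∃ g, f = relD ϖ N * g := by
  exact mkB_eq_zero_iff ϖ f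

lemma rel_regular (g : MvPolynomial (Fin 2) R) (h : (X 0 * X 1 - C ϖ) * g = 0) : g = 0 := by
  let u : Fin 2 →₀ ℕ := Finsupp.single 0 1 + Finsupp.single 1 1
  have hu : (X 0 * X 1 : MvPolynomial (Fin 2) R) = monomial u 1 := by
    simp [u, X, monomial_mul]
  have step : ∀ m, coeff m g = ϖ * coeff (u + m) g := by
    intro m
    have := congrArg (coeff (u + m)) h
    rw [hu, sub_mul, coeff_sub, coeff_monomial_mul, coeff_C_mul, coeff_zero, one_mul] at this
    exact sub_eq_zero.1 this
  have iter : ∀ (k : ℕ) m, coeff m g = ϖ ^ k * coeff (k • u + m) g := by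
    intro k
    induction k with
    | zero => intro m; simp
    | succ k ih =>
      intro m
      rw [ih m, step (k • u + m), ← mul_assoc, ← pow_succ, succ_nsmul', add_assoc u]
  ext m
  rw [iter (g.totalDegree + 1) m, coeff_zero]
  have : coeff ((g.totalDegree + 1) • u + m) g = 0 := by
    apply coeff_eq_zero_of_totalDegree_lt
    have : (g.totalDegree + 1) ≤ ((g.totalDegree + 1) • u + m) 0 := by
      simp [u]
    refine lt_of_lt_of_le (Nat.lt_succ_self _) (this.trans ?_)
    by_cases h0 : ((g.totalDegree + 1) • u + m) 0 = 0
    · rw [h0]; exact Nat.zero_le _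
    · exact Finset.single_le_sum (f := fun i => ((g.totalDegree + 1) • u + m) i)
        (fun _ _ => Nat.zero_le _) (Finsupp.mem_support_iff.2 h0)
  rw [this, mul_zero]

lemma relD_regular (g : Big R N) (h : relD ϖ N * g = 0) : g = 0 := rel_regular ϖ g h

open Classical in
/-- The trace-like functional on monomials. -/
def tauR (R : Type) [CommRing R] (N : ℕ) :
    MvPolynomial (Fin 2) R →ₗ[R] MvPolynomial (Fin 2) R :=
  (basisMonomials (Fin 2) R).constr R (fun m =>
    if ∀ i, m i % N = N - 1 then monomial (m.mapRange (· / N) (Nat.zero_div N)) 1 else 0)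

open Classical in
lemma tauR_monomial (m : Fin 2 →₀ ℕ) (c : R) :
    tauR R N (monomial m c) =
    if ∀ i, m i % N = N - 1 then monomial (m.mapRange (· / N) (Nat.zero_div N)) c else 0 := by
  have h1 : (monomial m c : MvPolynomial (Fin 2) R) = c • basisMonomials (Fin 2) R m := by
    simp [smul_monomial]
  rw [h1, map_smul, tauR, Module.Basis.constr_basis]
  split_ifs <;> simp [smul_monomial]

lemma tauR_expand_mul (hN : 1 ≤ N) (a f : MvPolynomial (Fin 2) R) :
    tauR R N (expand N a * f) = a * tauR R N f := by
  classical
  have hpos : 0 < N := hN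
  induction a using MvPolynomial.induction_on' with
  | add p q hp hq => rw [map_add, add_mul, map_add, hp, hq, add_mul]
  | monomial d c =>
    induction f using MvPolynomial.induction_on' with
    | add p q hp hq => rw [mul_add, map_add, hp, hq, map_add, mul_add]
    | monomial m e =>
      rw [expand_monomial, monomial_mul, tauR_monomial, tauR_monomial]
      have hiff : (∀ i, (N • d + m) i % N = N - 1) ↔ ∀ i, m i % N = N - 1 := by
        simp
      by_cases h : ∀ i, m i % N = N - 1
      · rw [if_pos (hiff.2 h), if_pos h, monomial_mul]
        refine congrArg (fun z : Fin 2 →₀ ℕ => monomial z (c * e)) (Finsupp.ext fun i => ?_)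
        simp [Nat.mul_add_div hpos]
      · rw [if_neg (fun h' => h (hiff.1 h')), if_neg h, mul_zero]

/-- The trace-like functional, `A`-linear. -/
def tau (hN : 1 ≤ N) : Big R N →ₗ[MvPolynomial (Fin 2) R] MvPolynomial (Fin 2) R where
  toFun f := tauR R N f
  map_add' f g := map_add (tauR R N) f g
  map_smul' a f := tauR_expand_mul hN a f

/-- Exponents of the basis. -/
def ex (r : Fin 2 → Fin N) : Fin 2 →₀ ℕ := Finsupp.equivFunOnFinite.symm (fun i => (r i : ℕ))

/-- Exponents of the dual basis. -/
def ex' (r : Fin 2 → Fin N) : Fin 2 →₀ ℕ :=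
  Finsupp.equivFunOnFinite.symm (fun i => N - 1 - (r i : ℕ))

/-- Basis. -/
def bas (R : Type) [CommRing R] (r : Fin 2 → Fin N) : Big R N := toBig N (monomial (ex r) 1)

/-- Dual basis. -/
def bas' (R : Type) [CommRing R] (r : Fin 2 → Fin N) : Big R N := toBig N (monomial (ex' r) 1)

lemma tauR_key (hN : 1 ≤ N) (f : MvPolynomial (Fin 2) R) :
    ∑ r : Fin 2 → Fin N, expand N (tauR R N (monomial (ex' r) 1 * f)) * monomial (ex r) 1 = f := by
  classical
  induction f using MvPolynomial.induction_on' with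
  | add p q hp hq =>
    conv_rhs => rw [← hp, ← hq]
    rw [← Finset.sum_add_distrib]
    refine Finset.sum_congr rfl fun r _ => ?_
    rw [mul_add, map_add, map_add, add_mul]
  | monomial m c =>
    have hpos : 0 < N := hN
    rw [Finset.sum_eq_single (fun i => (⟨m i % N, Nat.mod_lt _ hpos⟩ : Fin N))]
    · rw [monomial_mul, tauR_monomial, if_pos, expand_monomial, monomial_mul, one_mul, mul_one]
      · refine congrArg (fun z => monomial z c) (Finsupp.ext fun i => ?_)
        have h1 := Nat.mod_add_div (m i) N
        have h2 := Nat.mod_lt (m i) hpos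
        have h3 : (N - 1 - m i % N + m i) / N = m i / N := by
          rw [show N - 1 - m i % N + m i = (N - 1) + N * (m i / N) by omega,
            Nat.add_mul_div_left _ _ hpos, Nat.div_eq_of_lt (by omega), zero_add]
        simp [ex, ex', h3]
        omega
      · intro i
        have h1 := Nat.mod_add_div (m i) N
        have h2 := Nat.mod_lt (m i) hpos
        have : N - 1 - m i % N + m i = (N - 1) + N * (m i / N) := by omega
        simp [ex', this, Nat.mod_eq_of_lt (show N - 1 < N by omega)]
    · intro r _ hr
      rw [monomial_mul, tauR_monomial, if_neg, map_zero, zero_mul]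
      intro h
      apply hr
      funext i
      have hi : (N - 1 - (r i : ℕ) + m i) % N = N - 1 := by simpa [ex'] using h i
      have hlt := (r i).2
      apply Fin.ext
      change (r i : ℕ) = m i % N
      have h5 := Nat.mod_add_div (N - 1 - (r i : ℕ) + m i) N
      rw [hi] at h5
      have : m i = r i + N * ((N - 1 - (r i : ℕ) + m i) / N) := by omega
      rw [this, Nat.add_mul_mod_self_left, Nat.mod_eq_of_lt hlt]
    · intro h; exact absurd (Finset.mem_univ _) h

lemma tau_key (hN : 1 ≤ N) (f : Big R N) :
    ∑ r : Fin 2 → Fin N, tau hN (bas' R r * f) • bas R r = f := tauR_key hN f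

lemma big_projective (hN : 1 ≤ N) : Module.Projective (MvPolynomial (Fin 2) R) (Big R N) := by
  refine ⟨⟨∑ r : Fin 2 → Fin N, (Finsupp.lsingle (bas R r)).comp
    ((tau hN).comp (LinearMap.mulLeft _ (bas' R r))), fun f => ?_⟩⟩
  conv_rhs => rw [← tau_key hN f]
  simp [map_sum]

/-- The functional `f ↦ τ(g f)`. -/
def tauMul (hN : 1 ≤ N) (g : Big R N) :
    Big R N →ₗ[MvPolynomial (Fin 2) R] MvPolynomial (Fin 2) R :=
  (tau hN).comp (LinearMap.mulLeft _ g)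

lemma tauMul_apply (hN : 1 ≤ N) (g f : Big R N) : tauMul hN g f = tau hN (g * f) := rfl

lemma tau_nondeg (hN : 1 ≤ N) (g : Big R N) (h : ∀ f, tau hN (g * f) = 0) : g = 0 := by
  rw [← tau_key hN g]
  refine Finset.sum_eq_zero fun r _ => ?_
  rw [mul_comm, h, zero_smul]

/-- The element representing a functional. -/
def psi (R : Type) [CommRing R] (N : ℕ) :
    (Big R N →ₗ[MvPolynomial (Fin 2) R] MvPolynomial (Fin 2) R)
    →ₗ[MvPolynomial (Fin 2) R] Big R N :=
  ∑ r : Fin 2 → Fin N, (LinearMap.applyₗ (bas R r)).smulRight (bas' R r)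

lemma tau_psi (hN : 1 ≤ N) (φ : Big R N →ₗ[MvPolynomial (Fin 2) R] MvPolynomial (Fin 2) R)
    (f : Big R N) : tau hN (psi R N φ * f) = φ f := by
  conv_rhs => rw [← tau_key hN f]
  rw [psi, LinearMap.sum_apply, Finset.sum_mul, map_sum, map_sum]
  refine Finset.sum_congr rfl fun r _ => ?_
  rw [LinearMap.smulRight_apply, LinearMap.applyₗ_apply_apply, smul_mul_assoc, map_smul, map_smul,
    smul_eq_mul, smul_eq_mul, mul_comm]

lemma psi_tauMul (hN : 1 ≤ N) (g : Big R N) : psi R N (tauMul hN g) = g := by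
  rw [← sub_eq_zero]
  apply tau_nondeg hN
  intro f
  rw [sub_mul, map_sub, tau_psi, tauMul_apply, sub_self]

lemma psi_eq_iff (hN : 1 ≤ N) (φ : Big R N →ₗ[MvPolynomial (Fin 2) R] MvPolynomial (Fin 2) R)
    (g : Big R N) : psi R N φ = g ↔ ∀ f, φ f = tau hN (g * f) := by
  constructor
  · rintro rfl f
    rw [tau_psi]
  · intro h
    have : φ = tauMul hN g := LinearMap.ext h
    rw [this, psi_tauMul]

end Algebraic

/-!
For `A = R[T,S]` and `B = R[X,Y]/(XY - ϖ)` viewed as an `A`-module via `T ↦ X^N`,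
`S ↦ Y^N`, the groups `Ext^i_A(B, A)` vanish for `i ≠ 1`, and `Ext^1_A(B, A)` is
isomorphic to `B` as an `A`-module (the `A`-linearity of the isomorphism `e` is
expressed by `e (f • x) = toCurve f * e x`, which is the `A`-action on `B`).
-/
theorem stmt3 (R : Type) [CommRing R] (ϖ : R) (N : ℕ) (hN : 1 ≤ N) :
    (∀ i : ℕ, i ≠ 1 →
      Subsingleton
        (((Ext (MvPolynomial (Fin 2) R) (ModuleCat (MvPolynomial (Fin 2) R)) i).obj
            (Opposite.op (curveModCat R ϖ N))).obj
          (ModuleCat.of (MvPolynomial (Fin 2) R) (MvPolynomial (Fin 2) R)))) ∧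
    ∃ e : (((Ext (MvPolynomial (Fin 2) R) (ModuleCat (MvPolynomial (Fin 2) R)) 1).obj
            (Opposite.op (curveModCat R ϖ N))).obj
          (ModuleCat.of (MvPolynomial (Fin 2) R) (MvPolynomial (Fin 2) R)))
            ≃+ CurveRing R ϖ,
      ∀ (f : MvPolynomial (Fin 2) R) (x),
        e (f • x) = toCurve R ϖ N f * e x := by
  have hproj := big_projective (R := R) hN
  let A := MvPolynomial (Fin 2) R
  let P : ModuleCat.{0} A := ModuleCat.of A (Big R N)
  have : Projective P := (IsProjective.iff_projective (R := A) (Big R N)).1 hproj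
  let d : P ⟶ P := ModuleCat.ofHom (LinearMap.mulLeft A (relD ϖ N))
  let p : P ⟶ curveModCat R ϖ N :=
    (ModuleCat.ofHom (projB ϖ N) : P ⟶ ModuleCat.of A (CB R ϖ N))
  have w : d ≫ p = 0 := by
    apply ModuleCat.hom_ext
    apply LinearMap.ext
    intro f
    exact (projB_eq_zero_iff ϖ _).2 ⟨f, rfl⟩
  have hs : (ShortComplex.mk d p w).ShortExact := by
    apply ModuleCat.shortComplex_shortExact
    · intro f
      constructor
      · intro hf
        obtain ⟨g, hg⟩ := (projB_eq_zero_iff ϖ f).1 hf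
        exact ⟨g, hg.symm⟩
      · rintro ⟨g, rfl⟩
        exact (projB_eq_zero_iff ϖ _).2 ⟨g, rfl⟩
    · refine (injective_iff_map_eq_zero (LinearMap.mulLeft A (relD ϖ N))).2 ?_
      exact fun g hg => relD_regular ϖ g hg
    · exact projB_surjective ϖ
  let Y : ModuleCat.{0} A := ModuleCat.of A A
  refine ⟨fun i hi => ?_, ?_⟩
  · match i, hi with
    | 0, _ =>
      refine ext_subsingleton_zero d p w hs Y fun ψ hψ => ?_
      have h1 : ∀ f, ψ.hom (relD ϖ N * f) = 0 := fun f =>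
        LinearMap.congr_fun (congrArg ModuleCat.Hom.hom hψ) f
      have h2 : psi R N ψ.hom = 0 := by
        apply relD_regular ϖ
        apply tau_nondeg hN
        intro f
        rw [mul_comm (relD ϖ N), mul_assoc, tau_psi]
        exact h1 f
      apply ModuleCat.hom_ext
      apply LinearMap.ext
      intro f
      have h3 := (psi_eq_iff hN ψ.hom 0).1 h2 f
      rw [zero_mul, map_zero] at h3
      exact h3
    | n + 2, _ => exact ext_subsingleton_ge_two d p w hs Y n
  · let ρ : (P ⟶ Y) →ₗ[A] CB R ϖ N :=
      ((projB ϖ N).comp (psi R N)).comp (ModuleCat.homLinearEquiv (S := A)).toLinearMap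
    have hρ : ∀ φ : P ⟶ Y, ρ φ = projB ϖ N (psi R N φ.hom) := fun φ => rfl
    obtain ⟨e⟩ := ext_one_equiv d p w hs Y ρ
      (by
        intro b
        obtain ⟨g, rfl⟩ := projB_surjective ϖ b
        refine ⟨ModuleCat.ofHom (tauMul hN g), ?_⟩
        rw [hρ]
        exact congrArg _ (psi_tauMul hN g))
      (by
        intro φ
        rw [hρ, projB_eq_zero_iff]
        constructor
        · rintro ⟨g, hg⟩
          refine ⟨ModuleCat.ofHom (tauMul hN g), ?_⟩
          apply ModuleCat.hom_ext
          apply LinearMap.ext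
          intro f
          refine Eq.trans ?_ ((psi_eq_iff hN φ.hom _).1 hg f).symm
          change tau hN (g * (relD ϖ N * f)) = _
          congr 1
          ring
        · rintro ⟨ψ, rfl⟩
          refine ⟨psi R N ψ.hom, ?_⟩
          rw [psi_eq_iff hN]
          intro f
          rw [mul_comm (relD ϖ N), mul_assoc, tau_psi]
          rfl)
    exact ⟨e.toAddEquiv, fun f x => e.map_smul f x⟩

end
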